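/- arXiv:1906.10150 — 2 statements merged into one kernel-verified Lean document; each statement's English description precedes it below -/
import Mathlib

section
/- Superadditivity of f^R: for every entropy function S on five parties {A1, A2, B1, B2, V} satisfying SSA, if S_{A1B1} + S_{A2B2} = S_{A1A2B1B2} (i.e. I_{A1B1:A2B2} = 0), then S_{A1A2B1B2} + 2 S_{A1A2V} − S_{A1A2B1B2V} − S_V ≥ (S_{A1B1} + 2 S_{A1A2V} − S_{A1A2B1V} − S_{A2V}) + (S_{A2B2} + 2 S_{A1A2V} − S_{A1A2B2V} − S_{A1V}); that is, f^R of the joint system (A = A1A2, B = B1B2, V) is at least f^R(A1, B1, V1 = A2V) + f^R(A2, B2, V2 = A1V). -/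
/-- Strong subadditivity for an entropy function `S` on subsets of the party set `P`:
for pairwise disjoint `X Y Z`, `S(X∪Z) + S(Y∪Z) ≥ S(X∪Y∪Z) + S(Z)`. -/
def SSAfn {P : Type} [DecidableEq P] (S : Finset P → ℝ) : Prop :=
  ∀ X Y Z : Finset P, Disjoint X Y → Disjoint X Z → Disjoint Y Z →
    S (X ∪ Z) + S (Y ∪ Z) ≥ S (X ∪ Y ∪ Z) + S Z

/-- Weak monotonicity for an entropy function `S` on subsets of the party set `P`:
for pairwise disjoint `X Y Z`, `S(X∪Z) + S(Y∪Z) ≥ S(X) + S(Y)`. -/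
def WMfn {P : Type} [DecidableEq P] (S : Finset P → ℝ) : Prop :=
  ∀ X Y Z : Finset P, Disjoint X Y → Disjoint X Z → Disjoint Y Z →
    S (X ∪ Z) + S (Y ∪ Z) ≥ S X + S Y

/-!
The defect of superadditivity of `f^R`, plus `I(A₁B₁ : A₂B₂)`, is exactly
`I(A₁ : A₂ | V) + I(B₁ : B₂ | A₁A₂V)`, and both terms are nonnegative by strong subadditivity.
-/

section Entropy

variable {P : Type} [DecidableEq P]

/-- The mutual information `I(X : Y) = S(X) + S(Y) - S(XY)` of two groups of parties; it vanishes
when the state is a product of its reductions to `X` and `Y`. -/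
def mutualInfo (S : Finset P → ℝ) (X Y : Finset P) : ℝ :=
  S X + S Y - S (X ∪ Y)

/-- The conditional mutual information `I(X : Y | Z) = S(XZ) + S(YZ) - S(XYZ) - S(Z)`,
with no disjointness of the three groups of parties built in. -/
def condMutualInfo (S : Finset P → ℝ) (X Y Z : Finset P) : ℝ :=
  S (X ∪ Z) + S (Y ∪ Z) - S (X ∪ Y ∪ Z) - S Z

/-- The quantity `f^R(A, B, V)`, whose optimization gives the correlation measure `E_R`, normalised
without the customary factor `1/2`. -/
def fR (S : Finset P → ℝ) (A B V : Finset P) : ℝ :=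
  S (A ∪ B) + 2 * S (A ∪ V) - S (A ∪ B ∪ V) - S V

theorem SSAfn.condMutualInfo_nonneg {S : Finset P → ℝ} (hS : SSAfn S) {X Y : Finset P}
    (hXY : Disjoint X Y) (Z : Finset P) : 0 ≤ condMutualInfo S X Y Z := by
  -- `Z` may overlap `X` and `Y`, so apply strong subadditivity to `X \ Z` and `Y \ Z`.
  have hSSA := hS (X \ Z) (Y \ Z) Z (hXY.mono Finset.sdiff_subset Finset.sdiff_subset)
    Finset.sdiff_disjoint Finset.sdiff_disjoint
  rw [← Finset.union_sdiff_distrib] at hSSA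
  simp only [Finset.sdiff_union_self_eq_union] at hSSA
  unfold condMutualInfo
  linarith

theorem fR_union_add_mutualInfo (S : Finset P → ℝ) (A₁ A₂ B₁ B₂ V : Finset P) :
    fR S (A₁ ∪ A₂) (B₁ ∪ B₂) V + mutualInfo S (A₁ ∪ B₁) (A₂ ∪ B₂) =
      fR S A₁ B₁ (A₂ ∪ V) + fR S A₂ B₂ (A₁ ∪ V) +
        condMutualInfo S A₁ A₂ V + condMutualInfo S B₁ B₂ (A₁ ∪ A₂ ∪ V) := by
  simp only [fR, mutualInfo, condMutualInfo, Finset.union_comm, Finset.union_left_comm]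
  ring

theorem fR_superadditivity_general {S : Finset P → ℝ} (hS : SSAfn S) {A₁ A₂ B₁ B₂ : Finset P}
    (hA : Disjoint A₁ A₂) (hB : Disjoint B₁ B₂) (V : Finset P) :
    fR S A₁ B₁ (A₂ ∪ V) + fR S A₂ B₂ (A₁ ∪ V) ≤
      fR S (A₁ ∪ A₂) (B₁ ∪ B₂) V + mutualInfo S (A₁ ∪ B₁) (A₂ ∪ B₂) := by
  linarith [fR_union_add_mutualInfo S A₁ A₂ B₁ B₂ V, hS.condMutualInfo_nonneg hA V,
    hS.condMutualInfo_nonneg hB (A₁ ∪ A₂ ∪ V)]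

end Entropy

/-- Parties: `0 = A1`, `1 = A2`, `2 = B1`, `3 = B2`, `4 = V`.  Superadditivity of `f^R`
(stated without the overall factor 1/2): if `S_{A1B1} + S_{A2B2} = S_{A1A2B1B2}`
(i.e. `I_{A1B1:A2B2} = 0`), then
`f^R(A1A2, B1B2, V) ≥ f^R(A1, B1, A2V) + f^R(A2, B2, A1V)`
for every entropy function satisfying SSA. -/
theorem fR_superadditivity (S : Finset (Fin 5) → ℝ)
    (hempty : S ∅ = 0) (hSSA : SSAfn S)
    (hprod : S {0, 2} + S {1, 3} = S {0, 1, 2, 3}) :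
    S {0, 1, 2, 3} + 2 * S {0, 1, 4} - S {0, 1, 2, 3, 4} - S {4} ≥
      (S {0, 2} + 2 * S {0, 1, 4} - S {0, 1, 2, 4} - S {1, 4}) +
        (S {1, 3} + 2 * S {0, 1, 4} - S {0, 1, 3, 4} - S {0, 4}) := by
  have h := fR_superadditivity_general hSSA (A₁ := {0}) (A₂ := {1}) (B₁ := {2}) (B₂ := {3})
    (by decide) (by decide) {4}
  simp only [fR, mutualInfo, Finset.insert_union, Finset.singleton_union, Finset.insert_comm] at h
  linarith
end

section
/- Characterization of the 00-monotone cone (Table 1): a vector α ∈ ℝ^7 with components (α_A, α_B, α_V, α_AB, α_AV, α_BV, α_ABV) is 0A-valid and 0B-valid if and only if α is a nonnegative real linear combination of the seven vectors (1,1,0,−1,0,0,0), (1,0,0,0,−1,0,0), (0,0,0,0,1,1,−1), (0,0,0,1,0,0,−1), (0,1,0,0,0,−1,0), (0,0,1,0,0,0,0), (0,0,−1,0,0,0,0). -/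
/-- `α ∈ ℝ^7` (components ordered `α_A, α_B, α_V, α_AB, α_AV, α_BV, α_ABV`) is 0A-valid:
for every entropy function on the four parties `0 = A1`, `1 = A2`, `2 = B`, `3 = V`
satisfying SSA and WM,
`α_A S_{A2|A1} + α_AB S_{A2|A1B} + α_AV S_{A2|A1V} + α_ABV S_{A2|A1BV} ≥ 0`. -/
def Valid0A (α : Fin 7 → ℝ) : Prop :=
  ∀ S : Finset (Fin 4) → ℝ, S ∅ = 0 → SSAfn S → WMfn S →
    α 0 * (S {0, 1} - S {0}) + α 3 * (S {0, 1, 2} - S {0, 2}) +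
      α 4 * (S {0, 1, 3} - S {0, 3}) + α 6 * (S {0, 1, 2, 3} - S {0, 2, 3}) ≥ 0

/-- `α ∈ ℝ^7` is 1A-valid: for every entropy function on the four parties
`0 = A1`, `1 = A2`, `2 = B`, `3 = V` satisfying SSA and WM,
`α_A S_{A2|A1} + α_AB S_{A2|A1B} − α_BV S_{A2|BV} − α_V S_{A2|V} ≥ 0`. -/
def Valid1A (α : Fin 7 → ℝ) : Prop :=
  ∀ S : Finset (Fin 4) → ℝ, S ∅ = 0 → SSAfn S → WMfn S →
    α 0 * (S {0, 1} - S {0}) + α 3 * (S {0, 1, 2} - S {0, 2}) -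
      α 5 * (S {1, 2, 3} - S {2, 3}) - α 2 * (S {1, 3} - S {3}) ≥ 0

/-- `α ∈ ℝ^7` is 0B-valid: for every entropy function on the four parties
`0 = A`, `1 = B1`, `2 = B2`, `3 = V` satisfying SSA and WM,
`α_B S_{B2|B1} + α_AB S_{B2|B1A} + α_BV S_{B2|B1V} + α_ABV S_{B2|B1AV} ≥ 0`. -/
def Valid0B (α : Fin 7 → ℝ) : Prop :=
  ∀ S : Finset (Fin 4) → ℝ, S ∅ = 0 → SSAfn S → WMfn S →
    α 1 * (S {1, 2} - S {1}) + α 3 * (S {0, 1, 2} - S {0, 1}) +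
      α 5 * (S {1, 2, 3} - S {1, 3}) + α 6 * (S {0, 1, 2, 3} - S {0, 1, 3}) ≥ 0

/-!
Fix a party `y` and condition it on the four sets `{x}`, `{x, u}`, `{x, v}`, `{x, u, v}`, which
form a square under inclusion. Strong subadditivity says that the conditional entropy of `y`
decreases along the four edges of the square, so a linear functional of these four numbers is
nonnegative as soon as its coefficients are the divergence of a nonnegative flow along the edges.
Conversely, the indicator function of every lower set of the square, and the constant `-1`, are
attained by entropy functions; the resulting inequalities say that a nonnegative flow exists.

For 0A- and 0B-validity the two squares share their edge from `AB` to `ABV` and, since the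
coefficient of `AB` is common to both, the flow `t` entering `AB` can be chosen equal
(`t = max 0 (-α_AB)`). The flow along the edge to `ABV` from `AV`, resp. `BV`, is then also the
same, and the five distinct flow values are the coefficients of the first five rays. Neither kind
of validity involves `α_V`, which the last two rays account for.
-/

section EntropyFunctions

open Finset

variable {P : Type} [DecidableEq P]

/-- The entropy functions over which validity quantifies. -/
structure IsEntropyFn (S : Finset P → ℝ) : Prop where
  empty : S ∅ = 0
  ssa : SSAfn S
  wm : WMfn S

/-- The conditional entropy `S_{y|Z}` of a single party `y` given a set `Z` of parties. -/
def condEntropy (S : Finset P → ℝ) (y : P) (Z : Finset P) : ℝ :=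
  S (insert y Z) - S Z

theorem SSAfn.condEntropy_anti {S : Finset P → ℝ} (hS : SSAfn S) {y : P} {Z W : Finset P}
    (hZW : Z ⊆ W) (hy : y ∉ W) : condEntropy S y W ≤ condEntropy S y Z := by
  have h := hS {y} (W \ Z) Z (disjoint_singleton_left.2 fun h ↦ hy (sdiff_subset h))
    (disjoint_singleton_left.2 fun h ↦ hy (hZW h)) sdiff_disjoint
  rw [union_assoc, sdiff_union_of_subset hZW, singleton_union, singleton_union] at h
  unfold condEntropy
  linarith

theorem card_union_inter_of_disjoint {X Y : Finset P} (h : Disjoint X Y) (T : Finset P) :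
    #((X ∪ Y) ∩ T) = #(X ∩ T) + #(Y ∩ T) := by
  rw [union_inter_distrib_right]
  exact card_union_of_disjoint (h.mono inter_subset_left inter_subset_left)

theorem card_insert_inter {T Z : Finset P} {y : P} (hyT : y ∈ T) (hyZ : y ∉ Z) :
    #(insert y Z ∩ T) = #(Z ∩ T) + 1 := by
  rw [insert_inter_of_mem hyT, card_insert_of_notMem (by simp [hyZ])]

theorem isEntropyFn_card_inter {T : Finset P} {g : ℕ → ℕ} (hzero : g 0 = 0)
    (hssa : ∀ x y z, x + y + z ≤ #T → g (x + y + z) + g z ≤ g (x + z) + g (y + z))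
    (hwm : ∀ x y z, x + y + z ≤ #T → g x + g y ≤ g (x + z) + g (y + z)) :
    IsEntropyFn fun X ↦ (g #(X ∩ T) : ℝ) := by
  have card_le {X Y Z : Finset P} (hXY : Disjoint X Y) (hXYZ : Disjoint (X ∪ Y) Z) :
      #(X ∩ T) + #(Y ∩ T) + #(Z ∩ T) ≤ #T := by
    rw [← card_union_inter_of_disjoint hXY, ← card_union_inter_of_disjoint hXYZ]
    exact card_le_card inter_subset_right
  refine ⟨by simp [hzero], fun X Y Z hXY hXZ hYZ ↦ ?_, fun X Y Z hXY hXZ hYZ ↦ ?_⟩ <;>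
    have hXYZ : Disjoint (X ∪ Y) Z := disjoint_union_left.2 ⟨hXZ, hYZ⟩
  · simp only [card_union_inter_of_disjoint, hXY, hXZ, hYZ, hXYZ]
    exact_mod_cast hssa _ _ _ (card_le hXY hXYZ)
  · simp only [card_union_inter_of_disjoint, hXZ, hYZ]
    exact_mod_cast hwm _ _ _ (card_le hXY hXYZ)

/-- The rank function of the uniform matroid of rank `k` on `T`: the Shannon entropy of symbols
held by the parties in `T`, any `k` of which are independent and determine the others. -/
def uniformRank (T : Finset P) (k : ℕ) (X : Finset P) : ℝ :=
  (min #(X ∩ T) k : ℕ)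

theorem isEntropyFn_uniformRank (T : Finset P) (k : ℕ) : IsEntropyFn (uniformRank T k) :=
  isEntropyFn_card_inter (g := (min · k)) (Nat.zero_min k) (by grind) (by grind)

theorem condEntropy_uniformRank {T Z : Finset P} {y : P} (hyT : y ∈ T) (hyZ : y ∉ Z) (k : ℕ) :
    condEntropy (uniformRank T k) y Z = if #(Z ∩ T) < k then 1 else 0 := by
  rw [condEntropy, uniformRank, uniformRank, card_insert_inter hyT hyZ]
  split_ifs with h
  · rw [min_eq_left (by lia), min_eq_left h.le]
    simp
  · rw [min_eq_right (by lia), min_eq_right (not_lt.1 h), sub_self]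

/-- The entropy of a pure state shared by the parties in `T` that is maximally entangled across
every bipartition of `T`; two parties give a Bell pair. -/
def perfectEntropy (T X : Finset P) : ℝ :=
  (min #(X ∩ T) (#T - #(X ∩ T)) : ℕ)

theorem isEntropyFn_perfectEntropy (T : Finset P) : IsEntropyFn (perfectEntropy T) :=
  isEntropyFn_card_inter (g := fun n ↦ min n (#T - n)) (Nat.zero_min _) (by grind) (by grind)

theorem condEntropy_perfectEntropy {T Z : Finset P} {y : P} (hyT : y ∈ T) (hyZ : y ∉ Z)
    (hT : #T ≤ 2 * #(Z ∩ T)) : condEntropy (perfectEntropy T) y Z = -1 := by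
  have hcard := card_insert_inter hyT hyZ
  have hle : #(Z ∩ T) + 1 ≤ #T := hcard ▸ card_le_card inter_subset_right
  rw [condEntropy, perfectEntropy, perfectEntropy, hcard, min_eq_right (by lia),
    min_eq_right (by lia), Nat.cast_sub hle, Nat.cast_sub (by lia)]
  push_cast
  ring

/-- The coefficients `a`, `b`, `c`, `d` define a linear functional of the conditional entropies of
`y` on the square `{x}`, `{x, u}`, `{x, v}`, `{x, u, v}` that is nonnegative on entropy
functions. 0A- and 0B-validity are both of this form. -/
def NonnegOnSquare (x y u v : P) (a b c d : ℝ) : Prop :=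
  ∀ S : Finset P → ℝ, IsEntropyFn S →
    0 ≤ a * condEntropy S y {x} + b * condEntropy S y {x, u} +
      c * condEntropy S y {x, v} + d * condEntropy S y {x, u, v}

/-- A nonnegative flow on the square `{x}`, `{x, u}`, `{x, v}`, `{x, u, v}` with divergence
`a`, `b`, `c`, `d` and value `t` on the edge from `{x}` to `{x, u}`. The flows on the other edges
are determined by `t` and appear in the field types. -/
structure IsSquareFlow (t a b c d : ℝ) : Prop where
  bot_left : 0 ≤ t
  bot_right : 0 ≤ a - t
  left_top : 0 ≤ b + t
  right_top : 0 ≤ a + c - t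
  total : a + b + c + d = 0

theorem IsSquareFlow.nonnegOnSquare {t a b c d : ℝ} (h : IsSquareFlow t a b c d) {x y u v : P}
    (hy : y ∉ ({x, u, v} : Finset P)) : NonnegOnSquare x y u v a b c d := by
  intro S hS
  have anti {Z W : Finset P} (hZW : Z ⊆ W) (hW : W ⊆ {x, u, v}) :
      0 ≤ condEntropy S y Z - condEntropy S y W :=
    sub_nonneg.2 (hS.ssa.condEntropy_anti hZW fun h ↦ hy (hW h))
  have hbl := mul_nonneg h.bot_left (anti (Z := {x}) (W := {x, u}) (by grind) (by grind))
  have hbr := mul_nonneg h.bot_right (anti (Z := {x}) (W := {x, v}) (by grind) (by grind))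
  have hlt := mul_nonneg h.left_top (anti (Z := {x, u}) (by grind) subset_rfl)
  have hrt := mul_nonneg h.right_top (anti (Z := {x, v}) (by grind) subset_rfl)
  rw [show d = -(a + b + c) by linarith [h.total]]
  linarith

theorem NonnegOnSquare.isSquareFlow {x y u v : P} {a b c d : ℝ}
    (h : NonnegOnSquare x y u v a b c d) (hnodup : [x, y, u, v].Nodup) :
    IsSquareFlow (max 0 (-b)) a b c d := by
  obtain ⟨⟨hxy, hxu, hxv⟩, ⟨hyu, hyv⟩, huv⟩ :
      (x ≠ y ∧ x ≠ u ∧ x ≠ v) ∧ (y ≠ u ∧ y ≠ v) ∧ u ≠ v := by simpa using hnodup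
  have hUniform (T : Finset P) (k : ℕ) (hyT : y ∈ T) :
      0 ≤ a * (if #({x} ∩ T) < k then 1 else 0) + b * (if #({x, u} ∩ T) < k then 1 else 0) +
        c * (if #({x, v} ∩ T) < k then 1 else 0) +
        d * (if #({x, u, v} ∩ T) < k then 1 else 0) := by
    have := h _ (isEntropyFn_uniformRank T k)
    rwa [condEntropy_uniformRank hyT (by grind), condEntropy_uniformRank hyT (by grind),
      condEntropy_uniformRank hyT (by grind), condEntropy_uniformRank hyT (by grind)] at this
  have hone : 0 ≤ a + b + c + d := by
    simpa [hxy, hyu.symm, hyv.symm] using hUniform {y} 1 (by simp)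
  have hbot : 0 ≤ a := by
    simpa [*, Ne.symm] using hUniform {y, u, v} 1 (by simp)
  have hleft : 0 ≤ a + b := by
    simpa [*, Ne.symm] using hUniform {y, v} 1 (by simp)
  have hright : 0 ≤ a + c := by
    simpa [*, Ne.symm] using hUniform {y, u} 1 (by simp)
  have hproper : 0 ≤ a + b + c := by
    simpa [*, Ne.symm] using hUniform {y, u, v} 2 (by simp)
  have hneg : a + b + c + d ≤ 0 := by
    have hcond {Z : Finset P} (hx : x ∈ Z) (hyZ : y ∉ Z) :
        condEntropy (perfectEntropy {x, y}) y Z = -1 :=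
      condEntropy_perfectEntropy (by simp) hyZ (by
        simp [card_pair hxy, inter_insert_of_mem hx, inter_singleton_of_notMem hyZ])
    have := h _ (isEntropyFn_perfectEntropy {x, y})
    rw [hcond (by grind) (by grind), hcond (by grind) (by grind), hcond (by grind) (by grind),
      hcond (by grind) (by grind)] at this
    linarith
  exact ⟨le_max_left _ _, by grind, by grind, by grind, le_antisymm hneg hone⟩

end EntropyFunctions

theorem valid0A_iff_nonnegOnSquare {α : Fin 7 → ℝ} :
    Valid0A α ↔ NonnegOnSquare (0 : Fin 4) 1 2 3 (α 0) (α 3) (α 4) (α 6) := by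
  have hA : (insert 1 {0} : Finset (Fin 4)) = {0, 1} := by decide
  have hAB : (insert 1 {0, 2} : Finset (Fin 4)) = {0, 1, 2} := by decide
  have hAV : (insert 1 {0, 3} : Finset (Fin 4)) = {0, 1, 3} := by decide
  have hABV : (insert 1 {0, 2, 3} : Finset (Fin 4)) = {0, 1, 2, 3} := by decide
  simp only [NonnegOnSquare, condEntropy, hA, hAB, hAV, hABV]
  exact ⟨fun h S hS ↦ h S hS.empty hS.ssa hS.wm, fun h S h0 hssa hwm ↦ h S ⟨h0, hssa, hwm⟩⟩

theorem valid0B_iff_nonnegOnSquare {α : Fin 7 → ℝ} :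
    Valid0B α ↔ NonnegOnSquare (1 : Fin 4) 2 0 3 (α 1) (α 3) (α 5) (α 6) := by
  have hB : (insert 2 {1} : Finset (Fin 4)) = {1, 2} := by decide
  have hA : ({1, 0} : Finset (Fin 4)) = {0, 1} := by decide
  have hAB : (insert 2 {0, 1} : Finset (Fin 4)) = {0, 1, 2} := by decide
  have hBV : (insert 2 {1, 3} : Finset (Fin 4)) = {1, 2, 3} := by decide
  have hAV : ({1, 0, 3} : Finset (Fin 4)) = {0, 1, 3} := by decide
  have hABV : (insert 2 {0, 1, 3} : Finset (Fin 4)) = {0, 1, 2, 3} := by decide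
  simp only [NonnegOnSquare, condEntropy, hB, hA, hAB, hBV, hAV, hABV]
  exact ⟨fun h S hS ↦ h S hS.empty hS.ssa hS.wm, fun h S h0 hssa hwm ↦ h S ⟨h0, hssa, hwm⟩⟩

theorem valid0A_and_valid0B_iff_exists_isSquareFlow {α : Fin 7 → ℝ} :
    Valid0A α ∧ Valid0B α ↔
      ∃ t, IsSquareFlow t (α 0) (α 3) (α 4) (α 6) ∧ IsSquareFlow t (α 1) (α 3) (α 5) (α 6) := by
  rw [valid0A_iff_nonnegOnSquare, valid0B_iff_nonnegOnSquare]
  constructor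
  · rintro ⟨hA, hB⟩
    exact ⟨max 0 (-α 3), hA.isSquareFlow (by decide), hB.isSquareFlow (by decide)⟩
  · rintro ⟨t, hA, hB⟩
    exact ⟨hA.nonnegOnSquare (by decide), hB.nonnegOnSquare (by decide)⟩

/-- The seven generators of the 00-monotone cone in Table 1. -/
def rays00 : Fin 7 → Fin 7 → ℝ :=
  ![![1, 1, 0, -1, 0, 0, 0], ![1, 0, 0, 0, -1, 0, 0], ![0, 0, 0, 0, 1, 1, -1],
    ![0, 0, 0, 1, 0, 0, -1], ![0, 1, 0, 0, 0, -1, 0], ![0, 0, 1, 0, 0, 0, 0],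
    ![0, 0, -1, 0, 0, 0, 0]]

theorem sum_smul_rays00 (c : Fin 7 → ℝ) :
    ∑ i, c i • rays00 i =
      ![c 0 + c 1, c 0 + c 4, c 5 - c 6, c 3 - c 0, c 2 - c 1, c 2 - c 4, -c 2 - c 3] := by
  ext j
  fin_cases j <;> simp [rays00, Fin.sum_univ_succ] <;> ring

theorem exists_isSquareFlow_iff_exists_nonneg_sum_rays00 {α : Fin 7 → ℝ} :
    (∃ t, IsSquareFlow t (α 0) (α 3) (α 4) (α 6) ∧ IsSquareFlow t (α 1) (α 3) (α 5) (α 6)) ↔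
      ∃ c : Fin 7 → ℝ, (∀ i, 0 ≤ c i) ∧ α = ∑ i, c i • rays00 i := by
  simp only [sum_smul_rays00]
  constructor
  · rintro ⟨t, hA, hB⟩
    refine ⟨![t, α 0 - t, α 0 + α 4 - t, α 3 + t, α 1 - t, (α 2)⁺, (α 2)⁻], ?_, ?_⟩
    · simp [Fin.forall_fin_succ, hA.bot_left, hA.bot_right, hA.right_top, hA.left_top,
        hB.bot_right, posPart_nonneg, negPart_nonneg]
    · ext j
      fin_cases j <;> simp <;> linarith [hA.total, hB.total]
  · rintro ⟨c, hc, rfl⟩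
    have flow {p : ℝ} (hp : 0 ≤ p) :
        IsSquareFlow (c 0) (c 0 + p) (c 3 - c 0) (c 2 - p) (-c 2 - c 3) := by
      constructor <;> linarith [hc 0, hc 2, hc 3]
    exact ⟨c 0, flow (hc 1), flow (hc 4)⟩

/-- Characterization of the 00-monotone cone: `α` is 0A-valid and 0B-valid iff it is a
nonnegative linear combination of the seven extreme rays of Table 1. -/
theorem cone00_characterization (α : Fin 7 → ℝ) :
    (Valid0A α ∧ Valid0B α) ↔
      ∃ c : Fin 7 → ℝ, (∀ i, 0 ≤ c i) ∧
        α = ∑ i, c i • (![![1, 1, 0, -1, 0, 0, 0], ![1, 0, 0, 0, -1, 0, 0],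
          ![0, 0, 0, 0, 1, 1, -1], ![0, 0, 0, 1, 0, 0, -1], ![0, 1, 0, 0, 0, -1, 0],
          ![0, 0, 1, 0, 0, 0, 0], ![0, 0, -1, 0, 0, 0, 0]] : Fin 7 → Fin 7 → ℝ) i := by
  rw [valid0A_and_valid0B_iff_exists_isSquareFlow]
  exact exists_isSquareFlow_iff_exists_nonneg_sum_rays00
end
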